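/- arXiv:1410.2077 — 2 statements merged into one kernel-verified Lean document; each statement's English description precedes it below -/
import Mathlib

section
/- Let C₀ > 0 and let (y,u) be a classical solution of the regularized thin-film equation with control u on [0,T] × [a,b] such that y(t,x) ≥ C₀ for all (t,x) ∈ [0,T] × [a,b], and assume in addition that the mixed derivative ∂ₜ∂ₓy exists, is continuous on [0,T] × [a,b], and equals ∂ₓ∂ₜy. Set c = λC₀^β + ε and H = (∫ₐᵇ (∂ₓy(0,x))² dx + (1/c)∫₀ᵀ∫ₐᵇ u(s,x)² dx ds)^{1/2}. Then y is Hölder continuous in space with exponent 1/2 and constant H: for all t ∈ [0,T] and all x₁, x₂ ∈ [a,b], |y(t,x₁) − y(t,x₂)| ≤ H·|x₁ − x₂|^{1/2}. -/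
/-!
The proof is the energy estimate for `E(t) = ∫ (∂ₓy)² dx`. For fixed `t`, put `m = λ|y|^β + ε`; the
function `∂ₓy·∂ₜy + ∂ₓ²y·(m ∂ₓ³y) − ∂ₓ²y·u` vanishes at both endpoints and, by the equation, has
derivative `∂ₓy·∂ₜ∂ₓy + m(∂ₓ³y)² − ∂ₓ³y·u`. Hence `2 ∫ ∂ₓy·∂ₜ∂ₓy = 2 ∫ (∂ₓ³y·u − m(∂ₓ³y)²)`, which
by `m ≥ c` and `2 ∂ₓ³y·u ≤ c(∂ₓ³y)² + u²/c` is at most `(1/c) ∫ u²` (`dissipation_bound`).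
Integrating in time, with Fubini in place of differentiation under the integral sign, bounds `E(t)`
by `H²` (`energy_bound`). The Hölder estimate is then the Cauchy–Schwarz inequality applied to
`y(t,x₂) − y(t,x₁) = ∫ ∂ₓy` (`sq_sub_le_of_hasDerivAt`).
-/

open Set

/-- A classical solution of the regularized thin-film equation
`∂ₜ y = −∂ₓ[(λ|y|^β + ε)·∂ₓ³y] + ∂ₓ u` on `[0,T] × [a,b]`, with the boundary
conditions `∂ₓy = ∂ₓ³y = 0` and `u = 0` at `x = a, b`.  The functions
`yx, yxx, yxxx, yxxxx` are the successive spatial derivatives of `y`, `yt` is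
its time derivative, and `ux` is the spatial derivative of the control `u`;
all of them are continuous on `[0,T] × [a,b]`. -/
structure IsClassicalSolution (a b T lam ε β : ℝ)
    (y yx yxx yxxx yxxxx yt u ux : ℝ → ℝ → ℝ) : Prop where
  cont_y : ContinuousOn (fun p : ℝ × ℝ => y p.1 p.2) (Icc 0 T ×ˢ Icc a b)
  cont_yx : ContinuousOn (fun p : ℝ × ℝ => yx p.1 p.2) (Icc 0 T ×ˢ Icc a b)
  cont_yxx : ContinuousOn (fun p : ℝ × ℝ => yxx p.1 p.2) (Icc 0 T ×ˢ Icc a b)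
  cont_yxxx : ContinuousOn (fun p : ℝ × ℝ => yxxx p.1 p.2) (Icc 0 T ×ˢ Icc a b)
  cont_yxxxx : ContinuousOn (fun p : ℝ × ℝ => yxxxx p.1 p.2) (Icc 0 T ×ˢ Icc a b)
  cont_yt : ContinuousOn (fun p : ℝ × ℝ => yt p.1 p.2) (Icc 0 T ×ˢ Icc a b)
  cont_u : ContinuousOn (fun p : ℝ × ℝ => u p.1 p.2) (Icc 0 T ×ˢ Icc a b)
  cont_ux : ContinuousOn (fun p : ℝ × ℝ => ux p.1 p.2) (Icc 0 T ×ˢ Icc a b)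
  hyx : ∀ t ∈ Icc 0 T, ∀ x ∈ Icc a b, HasDerivAt (fun ξ => y t ξ) (yx t x) x
  hyxx : ∀ t ∈ Icc 0 T, ∀ x ∈ Icc a b, HasDerivAt (fun ξ => yx t ξ) (yxx t x) x
  hyxxx : ∀ t ∈ Icc 0 T, ∀ x ∈ Icc a b, HasDerivAt (fun ξ => yxx t ξ) (yxxx t x) x
  hyxxxx : ∀ t ∈ Icc 0 T, ∀ x ∈ Icc a b, HasDerivAt (fun ξ => yxxx t ξ) (yxxxx t x) x
  hyt : ∀ t ∈ Icc 0 T, ∀ x ∈ Icc a b, HasDerivAt (fun s => y s x) (yt t x) t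
  hux : ∀ t ∈ Icc 0 T, ∀ x ∈ Icc a b, HasDerivAt (fun ξ => u t ξ) (ux t x) x
  pde : ∀ t ∈ Icc 0 T, ∀ x ∈ Icc a b,
    HasDerivAt (fun ξ => (lam * |y t ξ| ^ β + ε) * yxxx t ξ) (ux t x - yt t x) x
  bc_yx_a : ∀ t ∈ Icc 0 T, yx t a = 0
  bc_yx_b : ∀ t ∈ Icc 0 T, yx t b = 0
  bc_yxxx_a : ∀ t ∈ Icc 0 T, yxxx t a = 0
  bc_yxxx_b : ∀ t ∈ Icc 0 T, yxxx t b = 0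
  bc_u_a : ∀ t ∈ Icc 0 T, u t a = 0
  bc_u_b : ∀ t ∈ Icc 0 T, u t b = 0

lemma slice_left {a b T : ℝ} {f : ℝ → ℝ → ℝ}
    (hf : ContinuousOn (fun p : ℝ × ℝ => f p.1 p.2) (Icc 0 T ×ˢ Icc a b))
    {t : ℝ} (ht : t ∈ Icc 0 T) : ContinuousOn (f t) (Icc a b) :=
  hf.comp (f := fun x => (t, x)) (by fun_prop) fun _ hx => ⟨ht, hx⟩

lemma slice_right {a b T : ℝ} {f : ℝ → ℝ → ℝ}
    (hf : ContinuousOn (fun p : ℝ × ℝ => f p.1 p.2) (Icc 0 T ×ˢ Icc a b))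
    {x : ℝ} (hx : x ∈ Icc a b) : ContinuousOn (fun s => f s x) (Icc 0 T) :=
  hf.comp (f := fun s => (s, x)) (by fun_prop) fun _ hs => ⟨hs, hx⟩

lemma integrable_rect {a b T : ℝ} {f : ℝ → ℝ → ℝ}
    (hf : ContinuousOn (fun p : ℝ × ℝ => f p.1 p.2) (Icc 0 T ×ˢ Icc a b)) :
    MeasureTheory.Integrable (fun p : ℝ × ℝ => f p.1 p.2)
      ((MeasureTheory.volume.restrict (Ioc 0 T)).prod
        (MeasureTheory.volume.restrict (Ioc a b))) := by
  rw [MeasureTheory.Measure.prod_restrict]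
  exact (hf.integrableOn_compact (isCompact_Icc.prod isCompact_Icc)).mono_set
    (prod_mono Ioc_subset_Icc_self Ioc_subset_Icc_self)

lemma intervalIntegrable_integral {a b T : ℝ} (hab : a ≤ b) (hT : 0 ≤ T) {f : ℝ → ℝ → ℝ}
    (hf : ContinuousOn (fun p : ℝ × ℝ => f p.1 p.2) (Icc 0 T ×ˢ Icc a b)) :
    IntervalIntegrable (fun s => ∫ x in a..b, f s x) MeasureTheory.volume 0 T := by
  rw [intervalIntegrable_iff_integrableOn_Ioc_of_le hT]
  simp only [intervalIntegral.integral_of_le hab]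
  exact (integrable_rect hf).integral_prod_left

lemma integral_swap_rect {a b T : ℝ} (hab : a ≤ b) (hT : 0 ≤ T) {f : ℝ → ℝ → ℝ}
    (hf : ContinuousOn (fun p : ℝ × ℝ => f p.1 p.2) (Icc 0 T ×ˢ Icc a b)) :
    ∫ s in (0 : ℝ)..T, ∫ x in a..b, f s x = ∫ x in a..b, ∫ s in (0 : ℝ)..T, f s x := by
  simp only [intervalIntegral.integral_of_le hab, intervalIntegral.integral_of_le hT]
  exact MeasureTheory.integral_integral_swap (integrable_rect hf)

/-- The Cauchy–Schwarz inequality for `f q - f p = ∫ f'`. -/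
lemma sq_sub_le_of_hasDerivAt {p q : ℝ} (hpq : p ≤ q) {f f' : ℝ → ℝ}
    (hf : ∀ x ∈ Icc p q, HasDerivAt f (f' x) x) (hf' : ContinuousOn f' (Icc p q)) :
    (f q - f p) ^ 2 ≤ (q - p) * ∫ x in p..q, (f' x) ^ 2 := by
  rcases hpq.eq_or_lt with rfl | hlt
  · simp
  have hd : 0 < q - p := sub_pos.2 hlt
  rw [← uIcc_of_le hpq] at hf hf'
  have h1 : ∫ x in p..q, f' x = f q - f p :=
    intervalIntegral.integral_eq_sub_of_hasDerivAt hf hf'.intervalIntegrable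
  set D := f q - f p
  -- Nonnegativity of the variance of `f'` around its mean value `D / (q - p)`.
  have h2 : 0 ≤ ∫ x in p..q, (f' x - D / (q - p)) ^ 2 :=
    intervalIntegral.integral_nonneg hpq fun x _ => sq_nonneg _
  have h3 : ∫ x in p..q, (f' x - D / (q - p)) ^ 2
      = (∫ x in p..q, (f' x) ^ 2) - 2 * (D / (q - p)) * D + (q - p) * (D / (q - p)) ^ 2 := by
    have e : ∀ x, (f' x - D / (q - p)) ^ 2
        = (f' x) ^ 2 - 2 * (D / (q - p)) * f' x + (D / (q - p)) ^ 2 := fun x => by ring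
    have i1 : IntervalIntegrable (fun x => (f' x) ^ 2) MeasureTheory.volume p q :=
      (hf'.pow 2).intervalIntegrable
    have i2 : IntervalIntegrable (fun x => 2 * (D / (q - p)) * f' x) MeasureTheory.volume p q :=
      (continuousOn_const.mul hf').intervalIntegrable
    simp only [e]
    rw [intervalIntegral.integral_add (i1.sub i2) intervalIntegrable_const,
      intervalIntegral.integral_sub i1 i2, intervalIntegral.integral_const_mul, h1,
      intervalIntegral.integral_const, smul_eq_mul]
  rw [h3] at h2
  have h4 : 0 ≤ (q - p) * ((∫ x in p..q, (f' x) ^ 2) - 2 * (D / (q - p)) * D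
      + (q - p) * (D / (q - p)) ^ 2) := mul_nonneg hd.le h2
  have h5 : (q - p) * (D / (q - p)) = D := by field_simp
  generalize D / (q - p) = r at *
  have h6 : (q - p) * ((∫ x in p..q, (f' x) ^ 2) - 2 * r * D + (q - p) * r ^ 2)
      = (q - p) * (∫ x in p..q, (f' x) ^ 2) - 2 * ((q - p) * r) * D + ((q - p) * r) ^ 2 := by
    ring
  rw [h6, h5] at h4
  linarith

/-- The energy estimate in differential form: the left-hand side is the time derivative of
`∫ (∂ₓy)² dx`, and the dissipation `-2 ∫ m (∂ₓ³y)²` absorbs `2 ∫ ∂ₓ³y·u` up to `(1/c) ∫ u²`. -/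
lemma dissipation_bound
    {a b T lam ε β C₀ : ℝ} (hab : a < b) (hlam : 0 < lam)
    (hε : 0 ≤ ε) (hβ : 1 < β) (hC₀ : 0 < C₀)
    {y yx yxx yxxx yxxxx yt u ux yxt : ℝ → ℝ → ℝ}
    (hsol : IsClassicalSolution a b T lam ε β y yx yxx yxxx yxxxx yt u ux)
    (hlower : ∀ t ∈ Icc (0 : ℝ) T, ∀ x ∈ Icc a b, C₀ ≤ y t x)
    (hyxt_cont : ContinuousOn (fun p : ℝ × ℝ => yxt p.1 p.2) (Icc 0 T ×ˢ Icc a b))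
    (hmixed : ∀ t ∈ Icc (0 : ℝ) T, ∀ x ∈ Icc a b,
      HasDerivAt (fun ξ => yt t ξ) (yxt t x) x)
    {t : ℝ} (ht : t ∈ Icc 0 T) :
    ∫ x in a..b, 2 * (yx t x * yxt t x)
      ≤ 1 / (lam * C₀ ^ β + ε) * ∫ x in a..b, (u t x) ^ 2 := by
  have hu := uIcc_of_le hab.le
  have hc : 0 < lam * C₀ ^ β + ε := by positivity
  have cy := slice_left hsol.cont_y ht
  have cyx := slice_left hsol.cont_yx ht
  have cyxxx := slice_left hsol.cont_yxxx ht
  have cu := slice_left hsol.cont_u ht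
  have cyxt := slice_left hyxt_cont ht
  have cm : ContinuousOn (fun x => lam * |y t x| ^ β + ε) (Icc a b) :=
    (continuousOn_const.mul (cy.abs.rpow_const fun _ _ => Or.inr (by linarith))).add
      continuousOn_const
  have c1 : ContinuousOn (fun x => yx t x * yxt t x) (Icc a b) := cyx.mul cyxt
  have c2 : ContinuousOn (fun x => (lam * |y t x| ^ β + ε) * yxxx t x ^ 2 - yxxx t x * u t x)
      (Icc a b) := (cm.mul (cyxxx.pow 2)).sub (cyxxx.mul cu)
  have c3 : ContinuousOn (fun x => 1 / (lam * C₀ ^ β + ε) * u t x ^ 2) (Icc a b) :=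
    continuousOn_const.mul (cu.pow 2)
  have key : ∫ x in a..b, (yx t x * yxt t x
      + ((lam * |y t x| ^ β + ε) * yxxx t x ^ 2 - yxxx t x * u t x)) = 0 := by
    rw [intervalIntegral.integral_eq_sub_of_hasDerivAt
      (f := fun x => yx t x * yt t x + yxx t x * ((lam * |y t x| ^ β + ε) * yxxx t x)
        - yxx t x * u t x)]
    · simp [hsol.bc_yx_a t ht, hsol.bc_yx_b t ht, hsol.bc_yxxx_a t ht, hsol.bc_yxxx_b t ht,
        hsol.bc_u_a t ht, hsol.bc_u_b t ht]
    · intro x hx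
      rw [hu] at hx
      have h := (((hsol.hyxx t ht x hx).fun_mul (hmixed t ht x hx)).fun_add
        ((hsol.hyxxx t ht x hx).fun_mul (hsol.pde t ht x hx))).fun_sub
        ((hsol.hyxxx t ht x hx).fun_mul (hsol.hux t ht x hx))
      convert h using 1
      ring
    · exact ContinuousOn.intervalIntegrable (by rw [hu]; exact c1.add c2)
  rw [← hu] at c1 c2 c3
  rw [intervalIntegral.integral_add c1.intervalIntegrable c2.intervalIntegrable] at key
  have e : ∫ x in a..b, 2 * (yx t x * yxt t x) = ∫ x in a..b,
      -2 * ((lam * |y t x| ^ β + ε) * yxxx t x ^ 2 - yxxx t x * u t x) := by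
    rw [intervalIntegral.integral_const_mul, intervalIntegral.integral_const_mul]
    linarith
  rw [e, ← intervalIntegral.integral_const_mul]
  refine intervalIntegral.integral_mono_on hab.le
    (continuousOn_const.mul c2).intervalIntegrable c3.intervalIntegrable fun x hx => ?_
  have hy := hlower t ht x hx
  have hm : lam * C₀ ^ β + ε ≤ lam * |y t x| ^ β + ε := by
    gcongr
    exact hy.trans (le_abs_self _)
  generalize lam * |y t x| ^ β + ε = m at *
  generalize lam * C₀ ^ β + ε = c at *
  have h1 : c * yxxx t x ^ 2 ≤ m * yxxx t x ^ 2 := by gcongr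
  have h2 : 0 ≤ c * (yxxx t x - u t x / c) ^ 2 := by positivity
  have h3 : c * (yxxx t x - u t x / c) ^ 2
      = c * yxxx t x ^ 2 - 2 * (yxxx t x * u t x) + 1 / c * u t x ^ 2 := by
    field_simp
    ring
  have h4 : 0 ≤ c * yxxx t x ^ 2 := by positivity
  linarith

lemma energy_bound
    {a b T lam ε β C₀ : ℝ} (hab : a < b) (hlam : 0 < lam)
    (hε : 0 ≤ ε) (hβ : 1 < β) (hC₀ : 0 < C₀)
    {y yx yxx yxxx yxxxx yt u ux yxt : ℝ → ℝ → ℝ}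
    (hsol : IsClassicalSolution a b T lam ε β y yx yxx yxxx yxxxx yt u ux)
    (hlower : ∀ t ∈ Icc (0 : ℝ) T, ∀ x ∈ Icc a b, C₀ ≤ y t x)
    (hyxt : ∀ t ∈ Icc (0 : ℝ) T, ∀ x ∈ Icc a b,
      HasDerivAt (fun s => yx s x) (yxt t x) t)
    (hyxt_cont : ContinuousOn (fun p : ℝ × ℝ => yxt p.1 p.2) (Icc 0 T ×ˢ Icc a b))
    (hmixed : ∀ t ∈ Icc (0 : ℝ) T, ∀ x ∈ Icc a b,
      HasDerivAt (fun ξ => yt t ξ) (yxt t x) x)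
    {t : ℝ} (ht : t ∈ Icc 0 T) :
    ∫ x in a..b, (yx t x) ^ 2 ≤ (∫ x in a..b, (yx 0 x) ^ 2)
      + (1 / (lam * C₀ ^ β + ε)) * (∫ s in (0 : ℝ)..T, ∫ x in a..b, (u s x) ^ 2) := by
  have hc : 0 < lam * C₀ ^ β + ε := by positivity
  have hT : 0 ≤ T := ht.1.trans ht.2
  have hsub : Icc 0 t ⊆ Icc 0 T := Icc_subset_Icc_right ht.2
  have cf : ContinuousOn (fun p : ℝ × ℝ => 2 * (yx p.1 p.2 * yxt p.1 p.2))
      (Icc 0 T ×ˢ Icc a b) := continuousOn_const.mul (hsol.cont_yx.mul hyxt_cont)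
  have cf' := cf.mono (prod_mono_left hsub)
  have cu2 : ContinuousOn (fun p : ℝ × ℝ => u p.1 p.2 ^ 2) (Icc 0 T ×ˢ Icc a b) :=
    hsol.cont_u.pow 2
  have iu := intervalIntegrable_integral (f := fun s x => u s x ^ 2) hab.le hT cu2
  have iu' := intervalIntegrable_integral (f := fun s x => u s x ^ 2) hab.le ht.1
    (cu2.mono (prod_mono_left hsub))
  have hsq : ∀ s ∈ Icc 0 T,
      IntervalIntegrable (fun x => yx s x ^ 2) MeasureTheory.volume a b := fun s hs =>
    ContinuousOn.intervalIntegrable (by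
      rw [uIcc_of_le hab.le]; exact (slice_left hsol.cont_yx hs).pow 2)
  have h0 : (0 : ℝ) ∈ Icc 0 T := ⟨le_rfl, hT⟩
  have e1 : ∫ x in a..b, ∫ s in (0 : ℝ)..t, 2 * (yx s x * yxt s x)
      = (∫ x in a..b, (yx t x) ^ 2) - ∫ x in a..b, (yx 0 x) ^ 2 := by
    rw [← intervalIntegral.integral_sub (hsq t ht) (hsq 0 h0)]
    refine intervalIntegral.integral_congr fun x hx => ?_
    rw [uIcc_of_le hab.le] at hx
    refine intervalIntegral.integral_eq_sub_of_hasDerivAt (f := fun s => yx s x ^ 2)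
      (fun s hs => ?_) ?_
    · rw [uIcc_of_le ht.1] at hs
      exact ((hyxt s (hsub hs) x hx).fun_pow 2).congr_deriv (by push_cast; ring)
    · refine ContinuousOn.intervalIntegrable ?_
      rw [uIcc_of_le ht.1]
      exact slice_right (f := fun s x => 2 * (yx s x * yxt s x)) cf' hx
  rw [← integral_swap_rect (f := fun s x => 2 * (yx s x * yxt s x)) hab.le ht.1 cf'] at e1
  have e2 : ∫ s in (0 : ℝ)..t, ∫ x in a..b, 2 * (yx s x * yxt s x)
      ≤ ∫ s in (0 : ℝ)..t, 1 / (lam * C₀ ^ β + ε) * ∫ x in a..b, (u s x) ^ 2 :=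
    intervalIntegral.integral_mono_on ht.1
      (intervalIntegrable_integral (f := fun s x => 2 * (yx s x * yxt s x)) hab.le ht.1 cf')
      (iu'.const_mul _) fun s hs =>
        dissipation_bound hab hlam hε hβ hC₀ hsol hlower hyxt_cont hmixed (hsub hs)
  have e3 : ∫ s in (0 : ℝ)..t, ∫ x in a..b, (u s x) ^ 2
      ≤ ∫ s in (0 : ℝ)..T, ∫ x in a..b, (u s x) ^ 2 :=
    intervalIntegral.integral_mono_interval le_rfl ht.1 ht.2
      (Filter.Eventually.of_forall fun s =>
        intervalIntegral.integral_nonneg hab.le fun x _ => sq_nonneg _) iu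
  rw [intervalIntegral.integral_const_mul] at e2
  have e4 := mul_le_mul_of_nonneg_left e3 (one_div_pos.2 hc).le
  linarith

/-- Lemma 2.2, Hölder continuity in space: a classical solution with `y ≥ C₀ > 0`
(and continuous mixed derivative `∂ₜ∂ₓ y = ∂ₓ∂ₜ y`) is `1/2`-Hölder continuous in
space, with constant `H = (‖∂ₓy(0)‖² + (1/c)∫₀ᵀ‖u‖²)^{1/2}`, `c = λC₀^β + ε`. -/
theorem thinFilm_holder_in_space
    (a b T lam ε β C₀ : ℝ) (hab : a < b) (hT : 0 < T) (hlam : 0 < lam)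
    (hε : 0 ≤ ε) (hβ : 1 < β) (hC₀ : 0 < C₀)
    (y yx yxx yxxx yxxxx yt u ux yxt : ℝ → ℝ → ℝ)
    (hsol : IsClassicalSolution a b T lam ε β y yx yxx yxxx yxxxx yt u ux)
    (hlower : ∀ t ∈ Icc (0 : ℝ) T, ∀ x ∈ Icc a b, C₀ ≤ y t x)
    (hyxt : ∀ t ∈ Icc (0 : ℝ) T, ∀ x ∈ Icc a b,
      HasDerivAt (fun s => yx s x) (yxt t x) t)
    (hyxt_cont : ContinuousOn (fun p : ℝ × ℝ => yxt p.1 p.2) (Icc 0 T ×ˢ Icc a b))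
    (hmixed : ∀ t ∈ Icc (0 : ℝ) T, ∀ x ∈ Icc a b,
      HasDerivAt (fun ξ => yt t ξ) (yxt t x) x) :
    ∀ t ∈ Icc (0 : ℝ) T, ∀ x₁ ∈ Icc a b, ∀ x₂ ∈ Icc a b,
      |y t x₁ - y t x₂| ≤
        ((∫ x in a..b, (yx 0 x) ^ 2)
            + (1 / (lam * C₀ ^ β + ε)) * (∫ s in (0 : ℝ)..T, ∫ x in a..b, (u s x) ^ 2)) ^ ((1 : ℝ) / 2)
          * |x₁ - x₂| ^ ((1 : ℝ) / 2) := by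
  intro t ht x₁ hx₁ x₂ hx₂
  have hE := energy_bound hab hlam hε hβ hC₀ hsol hlower hyxt hyxt_cont hmixed ht
  set K := (∫ x in a..b, (yx 0 x) ^ 2)
    + (1 / (lam * C₀ ^ β + ε)) * (∫ s in (0 : ℝ)..T, ∫ x in a..b, (u s x) ^ 2)
  have hK : 0 ≤ K :=
    (intervalIntegral.integral_nonneg hab.le fun x _ => sq_nonneg (yx t x)).trans hE
  have main : ∀ p ∈ Icc a b, ∀ q ∈ Icc a b, p ≤ q → (y t q - y t p) ^ 2 ≤ K * |p - q| := by
    intro p hp q hq hpq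
    have hs : Icc p q ⊆ Icc a b := Icc_subset_Icc hp.1 hq.2
    have c := slice_left hsol.cont_yx ht
    have h1 := sq_sub_le_of_hasDerivAt hpq (fun x hx => hsol.hyx t ht x (hs hx)) (c.mono hs)
    have h2 : ∫ x in p..q, (yx t x) ^ 2 ≤ ∫ x in a..b, (yx t x) ^ 2 :=
      intervalIntegral.integral_mono_interval hp.1 hpq hq.2
        (Filter.Eventually.of_forall fun x => sq_nonneg _)
        (ContinuousOn.intervalIntegrable (by rw [uIcc_of_le hab.le]; exact c.pow 2))
    rw [abs_sub_comm, abs_of_nonneg (sub_nonneg.2 hpq), mul_comm K]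
    exact h1.trans (mul_le_mul_of_nonneg_left (h2.trans hE) (sub_nonneg.2 hpq))
  rw [← Real.mul_rpow hK (abs_nonneg _), ← Real.sqrt_eq_rpow]
  apply Real.abs_le_sqrt
  rcases le_total x₁ x₂ with h | h
  · rw [sub_sq_comm]
    exact main x₁ hx₁ x₂ hx₂ h
  · rw [abs_sub_comm]
    exact main x₂ hx₂ x₁ hx₁ h
end

section
/- For all reals a < b, T > 0, λ > 0, β > 1, C₀ > 0, ε₀ ≥ 0, E₀ ≥ 0, M ≥ 0 and m₀ ≥ 0 there exists a constant H_time > 0 with the following property: for every ε ∈ [0,ε₀] and every classical solution (y,u) of the regularized thin-film equation with control u on [0,T] × [a,b] satisfying y(t,x) ≥ C₀ on [0,T] × [a,b], (1/2)∫ₐᵇ (∂ₓy(0,x))² dx ≤ E₀, ∫₀ᵀ∫ₐᵇ u(s,x)² dx ds ≤ M², and ∫ₐᵇ y(0,x) dx ≤ m₀, one has |y(t₂,x) − y(t₁,x)| ≤ H_time·|t₂ − t₁|^{1/8} for all t₁, t₂ ∈ [0,T] and all x ∈ [a,b]. -/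
/-!
The equation is a conservation law `∂ₜy = -∂ₓJ` with flux `J = m ∂ₓ³y - u` and mobility
`m = λ|y|^β + ε`; the boundary conditions make `J` vanish at `x = a, b`.

*Energy.* Testing with `∂ₓ²y` gives `d/dt ½∫(∂ₓy)² = -∫ m (∂ₓ³y)² + ∫ u ∂ₓ³y`. Since
`m ≥ λ C₀^β > 0`, Young's inequality absorbs half of the dissipation (`energy_inequality`), so the
energy is bounded uniformly in time, and `∬ m (∂ₓ³y)²` is bounded, both independently of `ε`.
Differentiability of the energy is delicate because `∂ₜ∂ₓy` is not assumed to exist; integrating by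
parts in the difference quotient (`energy_sub`, `energy_hasDerivAt`) leaves only `∂ₜy` and `∂ₓ²y`.

*Flux.* Mass is conserved, so the energy bound yields an upper bound for `y` (`height_le`), hence
for `m` since `ε ≤ ε₀`. Then `J² ≤ 2 m · m (∂ₓ³y)² + 2 u²` bounds `∬ J²` by a constant.

*Interpolation.* For `t₁ ≤ t₂` let `w = y(t₂) - y(t₁)` and let `W` be its primitive vanishing at `a`.
Integrating the conservation law gives `W = -∫ J ds` over `[t₁, t₂]` (`integral_increment`), so
`‖W‖₂² ≤ C (t₂ - t₁)` by Cauchy–Schwarz, and `W` vanishes at `b` as well. As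
`‖w‖₂² = -∫ W w'` and `|w|² ≤ 2 ∫ |w w'|` (`w` has a zero, by Rolle applied to `W`), one gets
`‖w‖_∞⁸ ≤ 16 ‖W‖₂² ‖w'‖₂⁶ ≤ C (t₂ - t₁)` (`pow_eight_le_of_primitive`), which is the
Hölder estimate.
-/

open Set

open Filter Topology

open scoped Interval

/-! ### Functions continuous on a rectangle -/

/-- A function continuous on the rectangle agrees there with a globally continuous one, obtained by
clamping both variables. This gives access to the parametric integral lemmas, which ask for
continuity on the whole plane. -/
lemma exists_continuous_extension {a b T : ℝ} (hab : a ≤ b) (hT : 0 ≤ T) {f : ℝ → ℝ → ℝ}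
    (hf : ContinuousOn (fun p : ℝ × ℝ => f p.1 p.2) (Icc 0 T ×ˢ Icc a b)) :
    ∃ g : ℝ → ℝ → ℝ, Continuous (Function.uncurry g) ∧
      ∀ t ∈ Icc 0 T, ∀ x ∈ Icc a b, g t x = f t x := by
  refine ⟨fun t x => f (max 0 (min t T)) (max a (min x b)), ?_, ?_⟩
  · have h1 : Continuous (fun p : ℝ × ℝ => (max 0 (min p.1 T), max a (min p.2 b))) := by fun_prop
    refine hf.comp_continuous h1 fun p => ⟨⟨?_, ?_⟩, ⟨?_, ?_⟩⟩ <;> simp [hab, hT]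
  · rintro t ⟨h1, h2⟩ x ⟨h3, h4⟩
    simp [h1, h2, h3, h4]

lemma continuousOn_slice {a b T : ℝ} {f : ℝ → ℝ → ℝ}
    (hf : ContinuousOn (fun p : ℝ × ℝ => f p.1 p.2) (Icc 0 T ×ˢ Icc a b))
    {t : ℝ} (ht : t ∈ Icc 0 T) : ContinuousOn (fun x => f t x) (Icc a b) :=
  hf.comp (f := fun x => (t, x)) (by fun_prop) fun _ hx => ⟨ht, hx⟩

lemma continuousOn_timeSlice {a b T : ℝ} {f : ℝ → ℝ → ℝ}
    (hf : ContinuousOn (fun p : ℝ × ℝ => f p.1 p.2) (Icc 0 T ×ˢ Icc a b))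
    {x : ℝ} (hx : x ∈ Icc a b) : ContinuousOn (fun t => f t x) (Icc 0 T) :=
  hf.comp (f := fun t => (t, x)) (by fun_prop) fun _ ht => ⟨ht, hx⟩

lemma continuousOn_integral_slice {a b T : ℝ} (hab : a ≤ b) (hT : 0 ≤ T) {f : ℝ → ℝ → ℝ}
    (hf : ContinuousOn (fun p : ℝ × ℝ => f p.1 p.2) (Icc 0 T ×ˢ Icc a b)) :
    ContinuousOn (fun t => ∫ x in a..b, f t x) (Icc 0 T) := by
  obtain ⟨g, hg, hgf⟩ := exists_continuous_extension hab hT hf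
  refine (intervalIntegral.continuous_parametric_intervalIntegral_of_continuous'
    (μ := MeasureTheory.volume) hg a b).continuousOn.congr fun t ht => ?_
  refine intervalIntegral.integral_congr fun x hx => ?_
  rw [uIcc_of_le hab] at hx
  exact (hgf t ht x hx).symm

lemma continuousOn_integral_time {a b T c d : ℝ} (hab : a ≤ b) (hT : 0 ≤ T) {f : ℝ → ℝ → ℝ}
    (hf : ContinuousOn (fun p : ℝ × ℝ => f p.1 p.2) (Icc 0 T ×ˢ Icc a b))
    (hc : 0 ≤ c) (hcd : c ≤ d) (hd : d ≤ T) :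
    ContinuousOn (fun x => ∫ t in c..d, f t x) (Icc a b) := by
  obtain ⟨g, hg, hgf⟩ := exists_continuous_extension hab hT hf
  have hg' : Continuous (Function.uncurry fun x t => g t x) := hg.comp continuous_swap
  refine (intervalIntegral.continuous_parametric_intervalIntegral_of_continuous'
    (μ := MeasureTheory.volume) hg' c d).continuousOn.congr fun x hx => ?_
  refine intervalIntegral.integral_congr fun t ht => ?_
  rw [uIcc_of_le hcd] at ht
  exact (hgf t ⟨hc.trans ht.1, ht.2.trans hd⟩ x hx).symm

lemma integral_swap_of_continuousOn {a b T c d q : ℝ}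
    {f : ℝ → ℝ → ℝ} (hf : ContinuousOn (fun p : ℝ × ℝ => f p.1 p.2) (Icc 0 T ×ˢ Icc a b))
    (hc : 0 ≤ c) (hcd : c ≤ d) (hd : d ≤ T) (hq : q ∈ Icc a b) :
    ∫ x in a..q, ∫ t in c..d, f t x = ∫ t in c..d, ∫ x in a..q, f t x := by
  have hint : MeasureTheory.IntegrableOn (Function.uncurry fun x t => f t x)
      ((Ι a q) ×ˢ (Ι c d)) := by
    have h1 : ContinuousOn (Function.uncurry fun x t => f t x) (Icc a b ×ˢ Icc 0 T) :=
      hf.comp (f := Prod.swap) continuous_swap.continuousOn fun p hp => ⟨hp.2, hp.1⟩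
    refine (h1.integrableOn_compact (isCompact_Icc.prod isCompact_Icc)).mono_set ?_
    rw [uIoc_of_le hq.1, uIoc_of_le hcd]
    rintro ⟨x, t⟩ ⟨hx, ht⟩
    exact ⟨⟨hx.1.le, hx.2.trans hq.2⟩, ⟨hc.trans ht.1.le, ht.2.trans hd⟩⟩
  exact MeasureTheory.intervalIntegral_intervalIntegral_swap hint

/-! ### One-dimensional inequalities -/

/-- Cauchy–Schwarz on an interval, from the discriminant of `r ↦ ∫ (f + r g)²`. -/
lemma sq_integral_mul_le {a b : ℝ} (hab : a ≤ b) {f g : ℝ → ℝ}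
    (hf : ContinuousOn f (Icc a b)) (hg : ContinuousOn g (Icc a b)) :
    (∫ x in a..b, f x * g x) ^ 2 ≤ (∫ x in a..b, f x ^ 2) * ∫ x in a..b, g x ^ 2 := by
  have iff : IntervalIntegrable (fun x => f x ^ 2) MeasureTheory.volume a b :=
    (hf.pow 2).intervalIntegrable_of_Icc hab
  have igg : IntervalIntegrable (fun x => g x ^ 2) MeasureTheory.volume a b :=
    (hg.pow 2).intervalIntegrable_of_Icc hab
  have ifg : IntervalIntegrable (fun x => f x * g x) MeasureTheory.volume a b :=
    (hf.mul hg).intervalIntegrable_of_Icc hab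
  have key : ∀ r : ℝ, 0 ≤ (∫ x in a..b, g x ^ 2) * (r * r) + (2 * ∫ x in a..b, f x * g x) * r
      + ∫ x in a..b, f x ^ 2 := by
    intro r
    have h0 : 0 ≤ ∫ x in a..b, (f x + r * g x) ^ 2 :=
      intervalIntegral.integral_nonneg hab fun x _ => sq_nonneg _
    have h1 : ∫ x in a..b, (f x + r * g x) ^ 2
        = ∫ x in a..b, (r * r * g x ^ 2 + 2 * r * (f x * g x)) + f x ^ 2 :=
      intervalIntegral.integral_congr fun x _ => by ring
    rw [h1, intervalIntegral.integral_add ((igg.const_mul _).add (ifg.const_mul _)) iff,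
      intervalIntegral.integral_add (igg.const_mul _) (ifg.const_mul _),
      intervalIntegral.integral_const_mul, intervalIntegral.integral_const_mul] at h0
    linarith
  have h := discrim_le_zero key
  rw [discrim] at h
  nlinarith

lemma abs_sub_le_integral_abs_deriv {a b : ℝ} {f f' : ℝ → ℝ}
    (hf : ∀ x ∈ Icc a b, HasDerivAt f (f' x) x) (hf' : ContinuousOn f' (Icc a b))
    {x ξ : ℝ} (hx : x ∈ Icc a b) (hξ : ξ ∈ Icc a b) :
    |f x - f ξ| ≤ ∫ z in a..b, |f' z| := by
  wlog h : ξ ≤ x generalizing x ξ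
  · rw [abs_sub_comm]
    exact this hξ hx (le_of_not_ge h)
  have hsub : Icc ξ x ⊆ Icc a b := Icc_subset_Icc hξ.1 hx.2
  rw [← intervalIntegral.integral_eq_sub_of_hasDerivAt
    (fun z hz => hf z (hsub (by rwa [uIcc_of_le h] at hz)))
    ((hf'.mono hsub).intervalIntegrable_of_Icc h)]
  refine (intervalIntegral.abs_integral_le_integral_abs h).trans ?_
  exact intervalIntegral.integral_mono_interval hξ.1 h hx.2
    (Eventually.of_forall fun z => abs_nonneg (f' z))
    (hf'.abs.intervalIntegrable_of_Icc (hx.1.trans hx.2))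

lemma sq_sub_le_integral_sq_deriv {a b : ℝ} {f f' : ℝ → ℝ}
    (hf : ∀ x ∈ Icc a b, HasDerivAt f (f' x) x) (hf' : ContinuousOn f' (Icc a b))
    {x ξ : ℝ} (hx : x ∈ Icc a b) (hξ : ξ ∈ Icc a b) :
    (f x - f ξ) ^ 2 ≤ (b - a) * ∫ z in a..b, f' z ^ 2 := by
  have hab : a ≤ b := hx.1.trans hx.2
  have h1 := abs_sub_le_integral_abs_deriv hf hf' hx hξ
  have h2 := sq_integral_mul_le hab (f := fun _ => 1) (g := fun z => |f' z|)
    continuousOn_const hf'.abs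
  simp only [one_mul, one_pow, intervalIntegral.integral_const, smul_eq_mul, mul_one,
    sq_abs] at h2
  rw [← sq_abs]
  exact (pow_le_pow_left₀ (abs_nonneg _) h1 2).trans h2

/-- Interpolation inequality behind the exponent `1/8`: a function `w` of mean zero satisfies
`‖w‖_∞⁸ ≤ 16 ‖W‖₂² ‖w'‖₂⁶`, where `W` is its primitive vanishing at both endpoints. -/
lemma pow_eight_le_of_primitive {a b A X : ℝ} (hab : a < b) {w w' : ℝ → ℝ}
    (hw : ∀ x ∈ Icc a b, HasDerivAt w (w' x) x) (hw' : ContinuousOn w' (Icc a b))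
    (h0 : ∫ x in a..b, w x = 0) (hA : ∫ x in a..b, (∫ z in a..x, w z) ^ 2 ≤ A)
    (hX : ∫ x in a..b, w' x ^ 2 ≤ X) {x : ℝ} (hx : x ∈ Icc a b) :
    w x ^ 8 ≤ 16 * A * X ^ 3 := by
  have cw : ContinuousOn w (Icc a b) := fun x hx => (hw x hx).continuousAt.continuousWithinAt
  have cW : ContinuousOn (fun x => ∫ z in a..x, w z) (Icc a b) := by
    have := intervalIntegral.continuousOn_primitive_interval
      (f := w) (a := a) (b := b) (μ := MeasureTheory.volume)
      (by rw [uIcc_of_le hab.le]; exact cw.integrableOn_Icc)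
    rwa [uIcc_of_le hab.le] at this
  have dW : ∀ x ∈ Ioo a b, HasDerivAt (fun x => ∫ z in a..x, w z) (w x) x := fun x hx =>
    intervalIntegral.integral_hasDerivAt_right
      ((cw.mono (Icc_subset_Icc_right hx.2.le)).intervalIntegrable_of_Icc hx.1.le)
      ((cw.mono Ioo_subset_Icc_self).stronglyMeasurableAtFilter isOpen_Ioo x hx)
      (hw x (Ioo_subset_Icc_self hx)).continuousAt
  obtain ⟨c, hc, hwc⟩ := exists_hasDerivAt_eq_zero hab cW (by simp [h0]) dW
  have hX0 : 0 ≤ ∫ x in a..b, w' x ^ 2 :=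
    intervalIntegral.integral_nonneg hab.le fun _ _ => sq_nonneg _
  have hA0 : 0 ≤ ∫ x in a..b, (∫ z in a..x, w z) ^ 2 :=
    intervalIntegral.integral_nonneg hab.le fun _ _ => sq_nonneg _
  have hQ0 : 0 ≤ ∫ x in a..b, w x ^ 2 :=
    intervalIntegral.integral_nonneg hab.le fun _ _ => sq_nonneg _
  -- `‖w‖₂² = -∫ W w'` for the primitive `W` of `w`, which vanishes at both ends.
  have hQ : (∫ x in a..b, w x ^ 2) ^ 2 ≤ A * X := by
    have hparts := intervalIntegral.integral_mul_deriv_eq_deriv_mul_of_hasDerivAt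
      (a := a) (b := b) (u := w) (u' := w') (v := fun x => ∫ z in a..x, w z) (v' := w)
      (by rwa [uIcc_of_le hab.le]) (by rwa [uIcc_of_le hab.le])
      (fun x hx => by
        rw [min_eq_left hab.le, max_eq_right hab.le] at hx
        exact hw x (Ioo_subset_Icc_self hx))
      (fun x hx => by
        rw [min_eq_left hab.le, max_eq_right hab.le] at hx
        exact dW x hx)
      (hw'.intervalIntegrable_of_Icc hab.le) (cw.intervalIntegrable_of_Icc hab.le)
    rw [h0, intervalIntegral.integral_same] at hparts
    have hsq : ∫ x in a..b, w x ^ 2 = ∫ x in a..b, w x * w x :=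
      intervalIntegral.integral_congr fun x _ => by ring
    rw [hsq, hparts]
    have hcs := sq_integral_mul_le hab.le hw' cW
    simp only [mul_zero, sub_zero, zero_sub, neg_sq]
    refine hcs.trans ?_
    rw [mul_comm]
    exact mul_le_mul hA hX hX0 (hA0.trans hA)
  -- The pointwise bound comes from integrating `(w²)' = 2 w w'` from a zero of `w`.
  have h4 : (w x ^ 2) ^ 2 ≤ 4 * ((∫ x in a..b, w x ^ 2) * X) := by
    have h1 := abs_sub_le_integral_abs_deriv (f := fun x => w x ^ 2)
      (f' := fun x => 2 * (w x * w' x))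
      (fun x hx => ((hw x hx).pow 2).congr_deriv (by push_cast; ring))
      (continuousOn_const.mul (cw.mul hw')) hx (Ioo_subset_Icc_self hc)
    have h2 : ∫ z in a..b, |2 * (w z * w' z)| = 2 * ∫ z in a..b, |w z| * |w' z| := by
      rw [← intervalIntegral.integral_const_mul]
      exact intervalIntegral.integral_congr fun z _ => by simp [abs_mul]
    have h3 := sq_integral_mul_le hab.le cw.abs hw'.abs
    simp only [sq_abs] at h3
    simp only [h2, hwc] at h1
    have h5 : w x ^ 2 ≤ 2 * ∫ z in a..b, |w z| * |w' z| := by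
      refine le_trans ?_ h1
      simp
    have h6 := pow_le_pow_left₀ (sq_nonneg _) h5 2
    have h7 := mul_le_mul_of_nonneg_left hX hQ0
    nlinarith
  have hX' : 0 ≤ X := hX0.trans hX
  calc w x ^ 8 = ((w x ^ 2) ^ 2) ^ 2 := by ring
    _ ≤ (4 * ((∫ x in a..b, w x ^ 2) * X)) ^ 2 := pow_le_pow_left₀ (by positivity) h4 2
    _ = 16 * (∫ x in a..b, w x ^ 2) ^ 2 * X ^ 2 := by ring
    _ ≤ 16 * (A * X) * X ^ 2 := by gcongr
    _ = 16 * A * X ^ 3 := by ring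

/-! ### Energy inequality -/

lemma continuousOn_mobility {a b T lam ε β : ℝ} {y yx yxx yxxx yxxxx yt u ux : ℝ → ℝ → ℝ}
    (hβ : 0 < β) (S : IsClassicalSolution a b T lam ε β y yx yxx yxxx yxxxx yt u ux) :
    ContinuousOn (fun p : ℝ × ℝ => lam * |y p.1 p.2| ^ β + ε) (Icc 0 T ×ˢ Icc a b) :=
  ((S.cont_y.abs.rpow_const fun _ _ => Or.inr hβ.le).const_smul lam).add continuousOn_const

/-- Increment of the energy `½∫ (∂ₓy)²` between two times, integrated by parts in `x` so that only
`y` and `∂ₓ²y` appear. The mixed derivative `∂ₜ∂ₓy`, which need not exist, is avoided. -/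
lemma energy_sub {a b T lam ε β : ℝ} {y yx yxx yxxx yxxxx yt u ux : ℝ → ℝ → ℝ} (hab : a ≤ b)
    (S : IsClassicalSolution a b T lam ε β y yx yxx yxxx yxxxx yt u ux)
    {s t : ℝ} (hs : s ∈ Icc 0 T) (ht : t ∈ Icc 0 T) :
    (1 / 2) * (∫ x in a..b, yx s x ^ 2) - (1 / 2) * (∫ x in a..b, yx t x ^ 2)
      = ∫ x in a..b, (y s x - y t x) * (-(1 / 2) * (yxx s x + yxx t x)) := by
  have cs := continuousOn_slice S.cont_yx hs
  have ct := continuousOn_slice S.cont_yx ht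
  have cs' := continuousOn_slice S.cont_yxx hs
  have ct' := continuousOn_slice S.cont_yxx ht
  have h := intervalIntegral.integral_mul_deriv_eq_deriv_mul (a := a) (b := b)
    (u := fun x => y s x - y t x) (u' := fun x => yx s x - yx t x)
    (v := fun x => -(1 / 2) * (yx s x + yx t x)) (v' := fun x => -(1 / 2) * (yxx s x + yxx t x))
    (fun x hx => by
      rw [uIcc_of_le hab] at hx
      exact (S.hyx s hs x hx).sub (S.hyx t ht x hx))
    (fun x hx => by
      rw [uIcc_of_le hab] at hx
      exact ((S.hyxx s hs x hx).add (S.hyxx t ht x hx)).const_mul _)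
    ((cs.sub ct).intervalIntegrable_of_Icc hab)
    ((continuousOn_const.mul (cs'.add ct')).intervalIntegrable_of_Icc hab)
  have is : IntervalIntegrable (fun x => yx s x ^ 2) MeasureTheory.volume a b :=
    (cs.pow 2).intervalIntegrable_of_Icc hab
  have it : IntervalIntegrable (fun x => yx t x ^ 2) MeasureTheory.volume a b :=
    (ct.pow 2).intervalIntegrable_of_Icc hab
  rw [h, S.bc_yx_a s hs, S.bc_yx_a t ht, S.bc_yx_b s hs, S.bc_yx_b t ht,
    ← mul_sub, ← intervalIntegral.integral_sub is it, ← intervalIntegral.integral_const_mul]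
  simp only [add_zero, mul_zero, sub_zero, zero_sub]
  rw [← intervalIntegral.integral_neg]
  exact intervalIntegral.integral_congr fun x _ => by ring

/-- The energy has derivative `-∫ ∂ₜy ∂ₓ²y` at interior times: dominated convergence in the
difference quotient given by `energy_sub`. -/
lemma energy_hasDerivAt {a b T lam ε β : ℝ} {y yx yxx yxxx yxxxx yt u ux : ℝ → ℝ → ℝ}
    (hab : a ≤ b) (S : IsClassicalSolution a b T lam ε β y yx yxx yxxx yxxxx yt u ux)
    {t : ℝ} (ht : t ∈ Ioo 0 T) :
    HasDerivAt (fun s => (1 / 2) * ∫ x in a..b, yx s x ^ 2)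
      (∫ x in a..b, yt t x * (-yxx t x)) t := by
  have htI : t ∈ Icc 0 T := Ioo_subset_Icc_self ht
  have hcomp : IsCompact (Icc (0 : ℝ) T ×ˢ Icc a b) := isCompact_Icc.prod isCompact_Icc
  obtain ⟨B, hB⟩ := hcomp.exists_bound_of_continuousOn S.cont_yt
  obtain ⟨C, hC⟩ := hcomp.exists_bound_of_continuousOn S.cont_yxx
  have hev : ∀ᶠ s in 𝓝[≠] t, s ∈ Icc 0 T :=
    nhdsWithin_le_nhds (Icc_mem_nhds ht.1 ht.2)
  rw [hasDerivAt_iff_tendsto_slope]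
  have heq : (fun s => ∫ x in a..b,
      ((s - t)⁻¹ * (y s x - y t x)) * (-(1 / 2) * (yxx s x + yxx t x)))
      =ᶠ[𝓝[≠] t] slope (fun s => (1 / 2) * ∫ x in a..b, yx s x ^ 2) t := by
    filter_upwards [hev] with s hs
    rw [slope_def_field, energy_sub hab S hs htI, div_eq_inv_mul _ (s - t),
      ← intervalIntegral.integral_const_mul]
    exact intervalIntegral.integral_congr fun x _ => by ring
  refine Tendsto.congr' heq ?_
  refine intervalIntegral.tendsto_integral_filter_of_dominated_convergence (fun _ => B * C)
    ?_ ?_ intervalIntegrable_const ?_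
  · filter_upwards [hev] with s hs
    rw [uIoc_of_le hab]
    refine ContinuousOn.aestronglyMeasurable (ContinuousOn.mono ?_ Ioc_subset_Icc_self)
      measurableSet_Ioc
    exact (continuousOn_const.mul ((continuousOn_slice S.cont_y hs).sub
      (continuousOn_slice S.cont_y htI))).mul (continuousOn_const.mul
      ((continuousOn_slice S.cont_yxx hs).add (continuousOn_slice S.cont_yxx htI)))
  · filter_upwards [hev, self_mem_nhdsWithin] with s hs hne
    refine Eventually.of_forall fun x hx => ?_
    rw [uIoc_of_le hab] at hx
    have hx' := Ioc_subset_Icc_self hx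
    have hst : 0 < ‖s - t‖ := norm_pos_iff.2 (sub_ne_zero.2 hne)
    have h1 : ‖y s x - y t x‖ ≤ B * ‖s - t‖ :=
      (convex_Icc (0 : ℝ) T).norm_image_sub_le_of_norm_hasDerivWithin_le
        (f := fun r => y r x) (f' := fun r => yt r x)
        (fun r hr => (S.hyt r hr x hx').hasDerivWithinAt) (fun r hr => hB (r, x) ⟨hr, hx'⟩)
        htI hs
    have h2 : ‖(s - t)⁻¹ * (y s x - y t x)‖ ≤ B := by
      rw [norm_mul, norm_inv, inv_mul_le_iff₀ hst, mul_comm]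
      exact h1
    have h3 : ‖-(1 / 2) * (yxx s x + yxx t x)‖ ≤ C := by
      have e1 := hC (s, x) ⟨hs, hx'⟩
      have e2 := hC (t, x) ⟨htI, hx'⟩
      simp only [Real.norm_eq_abs, abs_le] at e1 e2 ⊢
      constructor <;> linarith [e1.1, e1.2, e2.1, e2.2]
    rw [norm_mul]
    exact mul_le_mul h2 h3 (norm_nonneg _) ((norm_nonneg _).trans h2)
  · refine Eventually.of_forall fun x hx => ?_
    rw [uIoc_of_le hab] at hx
    have hx' := Ioc_subset_Icc_self hx
    have h1 := (S.hyt t htI x hx').tendsto_slope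
    have h2 : Tendsto (fun s => yxx s x) (𝓝[≠] t) (𝓝 (yxx t x)) := by
      have hc : ContinuousOn (fun s => yxx s x) (Icc 0 T) :=
        S.cont_yxx.comp (f := fun s => (s, x)) (by fun_prop) fun _ hs => ⟨hs, hx'⟩
      exact (hc.continuousAt (Icc_mem_nhds ht.1 ht.2)).tendsto.mono_left nhdsWithin_le_nhds
    have h3 := h1.mul ((h2.add_const (yxx t x)).const_mul (-(1 / 2)))
    convert h3 using 2
    · rw [slope_def_field, div_eq_inv_mul (y _ x - y t x)]
    · ring

/-- The energy derivative after inserting the equation `∂ₜy = -∂ₓJ`, with flux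
`J = (λ|y|^β + ε) ∂ₓ³y - u`, and integrating by parts; the flux vanishes at both endpoints. -/
lemma energy_production {a b T lam ε β : ℝ} {y yx yxx yxxx yxxxx yt u ux : ℝ → ℝ → ℝ}
    (hab : a ≤ b)
    (S : IsClassicalSolution a b T lam ε β y yx yxx yxxx yxxxx yt u ux)
    {t : ℝ} (ht : t ∈ Icc 0 T) :
    ∫ x in a..b, yt t x * (-yxx t x)
      = -∫ x in a..b, yxxx t x * ((lam * |y t x| ^ β + ε) * yxxx t x - u t x) := by
  have h := intervalIntegral.integral_mul_deriv_eq_deriv_mul (a := a) (b := b)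
    (u := fun x => yxx t x) (u' := fun x => yxxx t x)
    (v := fun x => (lam * |y t x| ^ β + ε) * yxxx t x - u t x)
    (v' := fun x => ux t x - yt t x - ux t x)
    (fun x hx => by
      rw [uIcc_of_le hab] at hx
      exact S.hyxxx t ht x hx)
    (fun x hx => by
      rw [uIcc_of_le hab] at hx
      exact (S.pde t ht x hx).sub (S.hux t ht x hx))
    ((continuousOn_slice S.cont_yxxx ht).intervalIntegrable_of_Icc hab)
    ((((continuousOn_slice S.cont_ux ht).sub (continuousOn_slice S.cont_yt ht)).sub
      (continuousOn_slice S.cont_ux ht)).intervalIntegrable_of_Icc hab)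
  rw [S.bc_yxxx_a t ht, S.bc_yxxx_b t ht, S.bc_u_a t ht, S.bc_u_b t ht] at h
  simp only [mul_zero, sub_zero, zero_sub] at h
  rw [← h]
  exact intervalIntegral.integral_congr fun x _ => by ring

/-- Energy inequality: half of the dissipation survives once the control term is absorbed, `c` being
a lower bound for the mobility `λ|y|^β + ε`. -/
lemma energy_inequality {a b T lam ε β c : ℝ} {y yx yxx yxxx yxxxx yt u ux : ℝ → ℝ → ℝ}
    (hab : a ≤ b) (hT : 0 ≤ T) (hβ : 0 < β) (hc : 0 < c)
    (S : IsClassicalSolution a b T lam ε β y yx yxx yxxx yxxxx yt u ux)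
    (hm : ∀ t ∈ Icc 0 T, ∀ x ∈ Icc a b, c ≤ lam * |y t x| ^ β + ε)
    {t : ℝ} (ht : t ∈ Icc 0 T) :
    (1 / 2) * (∫ x in a..b, yx t x ^ 2)
        + (1 / 2) * (∫ s in (0 : ℝ)..t, ∫ x in a..b, (lam * |y s x| ^ β + ε) * yxxx s x ^ 2)
      ≤ (1 / 2) * (∫ x in a..b, yx 0 x ^ 2)
        + 1 / (2 * c) * ∫ s in (0 : ℝ)..t, ∫ x in a..b, u s x ^ 2 := by
  have cm := continuousOn_mobility hβ S
  have hsub : Icc 0 t ⊆ Icc 0 T := Icc_subset_Icc_right ht.2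
  have cE : ContinuousOn (fun s => (1 / 2) * ∫ x in a..b, yx s x ^ 2) (Icc 0 T) :=
    continuousOn_const.mul (continuousOn_integral_slice hab hT (f := fun s x => yx s x ^ 2)
      (S.cont_yx.pow 2))
  have cP : ContinuousOn (fun s => ∫ x in a..b, yt s x * (-yxx s x)) (Icc 0 T) :=
    continuousOn_integral_slice hab hT (f := fun s x => yt s x * (-yxx s x))
      (S.cont_yt.mul S.cont_yxx.neg)
  have cD : ContinuousOn
      (fun s => ∫ x in a..b, (lam * |y s x| ^ β + ε) * yxxx s x ^ 2) (Icc 0 T) :=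
    continuousOn_integral_slice hab hT (f := fun s x => (lam * |y s x| ^ β + ε) * yxxx s x ^ 2)
      (cm.mul (S.cont_yxxx.pow 2))
  have cU : ContinuousOn (fun s => ∫ x in a..b, u s x ^ 2) (Icc 0 T) :=
    continuousOn_integral_slice hab hT (f := fun s x => u s x ^ 2) (S.cont_u.pow 2)
  have iP := (cP.mono hsub).intervalIntegrable_of_Icc (μ := MeasureTheory.volume) ht.1
  have iD := (cD.mono hsub).intervalIntegrable_of_Icc (μ := MeasureTheory.volume) ht.1
  have iU := (cU.mono hsub).intervalIntegrable_of_Icc (μ := MeasureTheory.volume) ht.1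
  have hftc := intervalIntegral.integral_eq_sub_of_hasDerivAt_of_le ht.1 (cE.mono hsub)
    (fun s hs => energy_hasDerivAt hab S ⟨hs.1, hs.2.trans_le ht.2⟩) iP
  have hle : ∫ s in (0 : ℝ)..t, ∫ x in a..b, yt s x * (-yxx s x)
      ≤ ∫ s in (0 : ℝ)..t, ((1 / (2 * c)) * (∫ x in a..b, u s x ^ 2)
        - (1 / 2) * ∫ x in a..b, (lam * |y s x| ^ β + ε) * yxxx s x ^ 2) := by
    refine intervalIntegral.integral_mono_on ht.1 iP ((iU.const_mul _).sub (iD.const_mul _))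
      fun s hs => ?_
    have hs' := hsub hs
    have sm := continuousOn_slice (f := fun s x => lam * |y s x| ^ β + ε) cm hs'
    have su := continuousOn_slice S.cont_u hs'
    have s3 := continuousOn_slice S.cont_yxxx hs'
    have i1 : IntervalIntegrable (fun x => 1 / (2 * c) * u s x ^ 2) MeasureTheory.volume a b :=
      (continuousOn_const.mul (su.pow 2)).intervalIntegrable_of_Icc hab
    have i2 : IntervalIntegrable
        (fun x => 1 / 2 * ((lam * |y s x| ^ β + ε) * yxxx s x ^ 2)) MeasureTheory.volume a b :=
      (continuousOn_const.mul (sm.mul (s3.pow 2))).intervalIntegrable_of_Icc hab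
    rw [energy_production hab S hs', ← intervalIntegral.integral_neg,
      ← intervalIntegral.integral_const_mul, ← intervalIntegral.integral_const_mul,
      ← intervalIntegral.integral_sub i1 i2]
    refine intervalIntegral.integral_mono_on hab
      ((s3.mul ((sm.mul s3).sub su)).neg.intervalIntegrable_of_Icc hab)
      (i1.sub i2)
      fun x hx => ?_
    -- Young's inequality `u·y''' ≤ u²/(2c) + c·y'''²/2`, absorbed by the dissipation.
    have hmx := hm s hs' x hx
    have h1 : u s x * yxxx s x ≤ 1 / (2 * c) * u s x ^ 2 + c / 2 * yxxx s x ^ 2 := by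
      have : 1 / (2 * c) * u s x ^ 2 + c / 2 * yxxx s x ^ 2 - u s x * yxxx s x
          = 1 / (2 * c) * (u s x - c * yxxx s x) ^ 2 := by
        field_simp
        ring
      have h2 : 0 ≤ 1 / (2 * c) * (u s x - c * yxxx s x) ^ 2 := by positivity
      linarith
    have h2 := mul_le_mul_of_nonneg_right hmx (sq_nonneg (yxxx s x))
    nlinarith
  rw [intervalIntegral.integral_sub (iU.const_mul _) (iD.const_mul _),
    intervalIntegral.integral_const_mul, intervalIntegral.integral_const_mul] at hle
  linarith

/-! ### Mass conservation and increments in time -/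

/-- Integrated form of `∂ₜy = -∂ₓJ`: the primitive of the increment of `y` over `[t₁,t₂]` is minus
the time integral of the flux `J = (λ|y|^β + ε) ∂ₓ³y - u`, which vanishes at `x = a`. -/
lemma integral_increment {a b T lam ε β : ℝ} {y yx yxx yxxx yxxxx yt u ux : ℝ → ℝ → ℝ}
    (S : IsClassicalSolution a b T lam ε β y yx yxx yxxx yxxxx yt u ux)
    {t₁ t₂ q : ℝ} (h1 : 0 ≤ t₁) (h12 : t₁ ≤ t₂) (h2 : t₂ ≤ T) (hq : q ∈ Icc a b) :
    ∫ x in a..q, (y t₂ x - y t₁ x)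
      = -∫ s in t₁..t₂, ((lam * |y s q| ^ β + ε) * yxxx s q - u s q) := by
  have hsubt : Icc t₁ t₂ ⊆ Icc 0 T := Icc_subset_Icc h1 h2
  have hsubx : Icc a q ⊆ Icc a b := Icc_subset_Icc_right hq.2
  have ha : a ∈ Icc a b := ⟨le_rfl, hq.1.trans hq.2⟩
  have e1 : ∫ x in a..q, (y t₂ x - y t₁ x) = ∫ x in a..q, ∫ s in t₁..t₂, yt s x := by
    refine intervalIntegral.integral_congr fun x hx => ?_
    rw [uIcc_of_le hq.1] at hx
    refine (intervalIntegral.integral_eq_sub_of_hasDerivAt (f := fun s => y s x)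
      (fun s hs => ?_)
      (((continuousOn_timeSlice S.cont_yt (hsubx hx)).mono
        hsubt).intervalIntegrable_of_Icc h12)).symm
    rw [uIcc_of_le h12] at hs
    exact S.hyt s (hsubt hs) x (hsubx hx)
  rw [e1, integral_swap_of_continuousOn S.cont_yt h1 h12 h2 hq, ← intervalIntegral.integral_neg]
  refine intervalIntegral.integral_congr fun s hs => ?_
  rw [uIcc_of_le h12] at hs
  have hs' := hsubt hs
  have e2 := intervalIntegral.integral_eq_sub_of_hasDerivAt (a := a) (b := q)
    (f := fun x => u s x - (lam * |y s x| ^ β + ε) * yxxx s x)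
    (f' := fun x => ux s x - (ux s x - yt s x))
    (fun x hx => by
      rw [uIcc_of_le hq.1] at hx
      exact (S.hux s hs' x (hsubx hx)).sub (S.pde s hs' x (hsubx hx)))
    ((((continuousOn_slice S.cont_ux hs').sub ((continuousOn_slice S.cont_ux hs').sub
      (continuousOn_slice S.cont_yt hs'))).mono hsubx).intervalIntegrable_of_Icc hq.1)
  simp only [sub_sub_cancel, S.bc_u_a s hs', S.bc_yxxx_a s hs', mul_zero, sub_zero] at e2
  rw [e2]
  ring

lemma mass_conserved {a b T lam ε β : ℝ} {y yx yxx yxxx yxxxx yt u ux : ℝ → ℝ → ℝ}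
    (hab : a ≤ b) (S : IsClassicalSolution a b T lam ε β y yx yxx yxxx yxxxx yt u ux)
    {t₁ t₂ : ℝ} (h1 : 0 ≤ t₁) (h12 : t₁ ≤ t₂) (h2 : t₂ ≤ T) :
    ∫ x in a..b, (y t₂ x - y t₁ x) = 0 := by
  rw [integral_increment S h1 h12 h2 (right_mem_Icc.2 hab), neg_eq_zero]
  refine (intervalIntegral.integral_congr (g := fun _ => (0 : ℝ)) fun s hs => ?_).trans (by simp)
  rw [uIcc_of_le h12] at hs
  have hs' : s ∈ Icc 0 T := Icc_subset_Icc h1 h2 hs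
  simp [S.bc_yxxx_b s hs', S.bc_u_b s hs']

/-- Upper bound for `y` from its mass, which is conserved, and from its oscillation, which
the energy controls. The summand `1` comes from bounding `d ≤ d² + 1` instead of taking
a square root. -/
lemma height_le {a b T lam ε β m₀ E : ℝ} {y yx yxx yxxx yxxxx yt u ux : ℝ → ℝ → ℝ}
    (hab : a < b) (S : IsClassicalSolution a b T lam ε β y yx yxx yxxx yxxxx yt u ux)
    (hm₀ : ∫ x in a..b, y 0 x ≤ m₀) {t : ℝ} (ht : t ∈ Icc 0 T)
    (hE : ∫ x in a..b, yx t x ^ 2 ≤ 2 * E) {x : ℝ} (hx : x ∈ Icc a b) :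
    y t x ≤ m₀ / (b - a) + ((b - a) * (2 * E) + 1) := by
  have hba : 0 < b - a := sub_pos.2 hab
  have h0 : (0 : ℝ) ∈ Icc 0 T := ⟨le_rfl, ht.1.trans ht.2⟩
  have it : IntervalIntegrable (fun x => y t x) MeasureTheory.volume a b :=
    (continuousOn_slice S.cont_y ht).intervalIntegrable_of_Icc hab.le
  have i0 : IntervalIntegrable (fun x => y 0 x) MeasureTheory.volume a b :=
    (continuousOn_slice S.cont_y h0).intervalIntegrable_of_Icc hab.le
  have hmass := mass_conserved hab.le S le_rfl ht.1 ht.2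
  rw [intervalIntegral.integral_sub it i0] at hmass
  have hosc : ∀ ξ ∈ Icc a b, y t x - ((b - a) * (2 * E) + 1) ≤ y t ξ := by
    intro ξ hξ
    have h1 := sq_sub_le_integral_sq_deriv (S.hyx t ht) (continuousOn_slice S.cont_yx ht) hx hξ
    have h2 := mul_le_mul_of_nonneg_left hE hba.le
    nlinarith [sq_nonneg (y t x - y t ξ - 1)]
  have hint := intervalIntegral.integral_mono_on hab.le intervalIntegrable_const it hosc
  rw [intervalIntegral.integral_const, smul_eq_mul] at hint
  rw [← sub_le_iff_le_add, le_div_iff₀ hba]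
  linarith

/-- Eighth power of the Hölder estimate, given bounds on the energy and on the space-time
`L²` norm of the flux: Cauchy–Schwarz in time turns the latter into a factor `t₂ - t₁`. -/
lemma increment_pow_eight_le {a b T lam ε β E CJ : ℝ} {y yx yxx yxxx yxxxx yt u ux : ℝ → ℝ → ℝ}
    (hab : a < b) (hβ : 0 < β)
    (S : IsClassicalSolution a b T lam ε β y yx yxx yxxx yxxxx yt u ux)
    (hE : ∀ t ∈ Icc 0 T, ∫ x in a..b, yx t x ^ 2 ≤ 2 * E)
    (hJ : ∫ s in (0 : ℝ)..T, ∫ x in a..b,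
      ((lam * |y s x| ^ β + ε) * yxxx s x - u s x) ^ 2 ≤ CJ)
    {t₁ t₂ x : ℝ} (h1 : 0 ≤ t₁) (h12 : t₁ ≤ t₂) (h2 : t₂ ≤ T) (hx : x ∈ Icc a b) :
    (y t₂ x - y t₁ x) ^ 8 ≤ 16 * ((t₂ - t₁) * CJ) * (8 * E) ^ 3 := by
  have hT : 0 ≤ T := h1.trans (h12.trans h2)
  have m1 : t₁ ∈ Icc 0 T := ⟨h1, h12.trans h2⟩
  have m2 : t₂ ∈ Icc 0 T := ⟨h1.trans h12, h2⟩
  have hsubt : Icc t₁ t₂ ⊆ Icc 0 T := Icc_subset_Icc h1 h2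
  have cJ : ContinuousOn
      (fun p : ℝ × ℝ => (lam * |y p.1 p.2| ^ β + ε) * yxxx p.1 p.2 - u p.1 p.2)
      (Icc 0 T ×ˢ Icc a b) := ((continuousOn_mobility hβ S).mul S.cont_yxxx).sub S.cont_u
  have cJ2 : ContinuousOn
      (fun p : ℝ × ℝ => ((lam * |y p.1 p.2| ^ β + ε) * yxxx p.1 p.2 - u p.1 p.2) ^ 2)
      (Icc 0 T ×ˢ Icc a b) := cJ.pow 2
  have c1 := continuousOn_slice S.cont_yx m1
  have c2 := continuousOn_slice S.cont_yx m2
  refine pow_eight_le_of_primitive hab (w := fun x => y t₂ x - y t₁ x)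
    (w' := fun x => yx t₂ x - yx t₁ x)
    (fun x hx => (S.hyx t₂ m2 x hx).sub (S.hyx t₁ m1 x hx)) (c2.sub c1)
    (mass_conserved hab.le S h1 h12 h2) ?_ ?_ hx
  · have e : ∫ x in a..b, (∫ z in a..x, (y t₂ z - y t₁ z)) ^ 2
        = ∫ x in a..b, (∫ s in t₁..t₂, ((lam * |y s x| ^ β + ε) * yxxx s x - u s x)) ^ 2 := by
      refine intervalIntegral.integral_congr fun q hq => ?_
      rw [uIcc_of_le hab.le] at hq
      simp only [integral_increment S h1 h12 h2 hq, neg_sq]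
    have hcs : ∫ x in a..b, (∫ s in t₁..t₂, ((lam * |y s x| ^ β + ε) * yxxx s x - u s x)) ^ 2
        ≤ ∫ x in a..b, (t₂ - t₁) *
          ∫ s in t₁..t₂, ((lam * |y s x| ^ β + ε) * yxxx s x - u s x) ^ 2 := by
      refine intervalIntegral.integral_mono_on hab.le
        (((continuousOn_integral_time hab.le hT
          (f := fun s x => (lam * |y s x| ^ β + ε) * yxxx s x - u s x)
          cJ h1 h12 h2).pow 2).intervalIntegrable_of_Icc hab.le)
        ((continuousOn_const.mul (continuousOn_integral_time hab.le hT
          (f := fun s x => ((lam * |y s x| ^ β + ε) * yxxx s x - u s x) ^ 2)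
          cJ2 h1 h12 h2)).intervalIntegrable_of_Icc hab.le) fun q hq => ?_
      have h := sq_integral_mul_le h12 (f := fun _ => 1)
        (g := fun s => (lam * |y s q| ^ β + ε) * yxxx s q - u s q) continuousOn_const
        ((continuousOn_timeSlice
          (f := fun s x => (lam * |y s x| ^ β + ε) * yxxx s x - u s x) cJ hq).mono hsubt)
      simpa only [one_mul, one_pow, intervalIntegral.integral_const, smul_eq_mul, mul_one] using h
    rw [e]
    refine hcs.trans ?_
    rw [intervalIntegral.integral_const_mul, integral_swap_of_continuousOn
      (f := fun s x => ((lam * |y s x| ^ β + ε) * yxxx s x - u s x) ^ 2)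
      cJ2 h1 h12 h2 (right_mem_Icc.2 hab.le)]
    refine mul_le_mul_of_nonneg_left (le_trans ?_ hJ) (sub_nonneg.2 h12)
    exact intervalIntegral.integral_mono_interval h1 h12 h2
      (Eventually.of_forall fun s => intervalIntegral.integral_nonneg hab.le
        fun _ _ => sq_nonneg _)
      ((continuousOn_integral_slice hab.le hT
        (f := fun s x => ((lam * |y s x| ^ β + ε) * yxxx s x - u s x) ^ 2)
        cJ2).intervalIntegrable_of_Icc hT)
  · have i1 : IntervalIntegrable (fun x => 2 * yx t₁ x ^ 2) MeasureTheory.volume a b :=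
      (continuousOn_const.mul (c1.pow 2)).intervalIntegrable_of_Icc hab.le
    have i2 : IntervalIntegrable (fun x => 2 * yx t₂ x ^ 2) MeasureTheory.volume a b :=
      (continuousOn_const.mul (c2.pow 2)).intervalIntegrable_of_Icc hab.le
    have h := intervalIntegral.integral_mono_on hab.le
      (((c2.sub c1).pow 2).intervalIntegrable_of_Icc hab.le) (i2.add i1)
      (fun x _ => show (yx t₂ x - yx t₁ x) ^ 2 ≤ 2 * yx t₂ x ^ 2 + 2 * yx t₁ x ^ 2 by
        nlinarith [sq_nonneg (yx t₂ x + yx t₁ x)])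
    refine h.trans ?_
    rw [intervalIntegral.integral_add i2 i1, intervalIntegral.integral_const_mul,
      intervalIntegral.integral_const_mul]
    linarith [hE t₁ m1, hE t₂ m2]

/-! ### The Hölder estimate -/

/-- Lemma 2.3 (Hölder continuity in time): there is a constant `H_time > 0`,
depending only on the data `a, b, T, λ, β, C₀, ε₀, E₀, M, m₀`, such that every
classical solution of the regularized thin-film equation (for any `ε ∈ [0,ε₀]`)
with `y ≥ C₀`, initial energy at most `E₀`, control norm at most `M²` and initial
mass at most `m₀` satisfies `|y(t₂,x) − y(t₁,x)| ≤ H_time·|t₂ − t₁|^{1/8}`. -/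
theorem thinFilm_holder_in_time
    (a b T lam β C₀ ε₀ E₀ M m₀ : ℝ) (hab : a < b) (hT : 0 < T) (hlam : 0 < lam)
    (hβ : 1 < β) (hC₀ : 0 < C₀) (hε₀ : 0 ≤ ε₀) (hE₀ : 0 ≤ E₀) (hM : 0 ≤ M)
    (hm₀ : 0 ≤ m₀) :
    ∃ Htime : ℝ, 0 < Htime ∧
      ∀ ε ∈ Icc (0 : ℝ) ε₀,
      ∀ y yx yxx yxxx yxxxx yt u ux : ℝ → ℝ → ℝ,
        IsClassicalSolution a b T lam ε β y yx yxx yxxx yxxxx yt u ux →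
        (∀ t ∈ Icc (0 : ℝ) T, ∀ x ∈ Icc a b, C₀ ≤ y t x) →
        (1 / 2) * (∫ x in a..b, (yx 0 x) ^ 2) ≤ E₀ →
        (∫ s in (0 : ℝ)..T, ∫ x in a..b, (u s x) ^ 2) ≤ M ^ 2 →
        (∫ x in a..b, y 0 x) ≤ m₀ →
        ∀ t₁ ∈ Icc (0 : ℝ) T, ∀ t₂ ∈ Icc (0 : ℝ) T, ∀ x ∈ Icc a b,
          |y t₂ x - y t₁ x| ≤ Htime * |t₂ - t₁| ^ ((1 : ℝ) / 8) := by
  have hβ0 : 0 < β := one_pos.trans hβ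
  have hba : 0 < b - a := sub_pos.2 hab
  have hcpos : 0 < lam * C₀ ^ β := mul_pos hlam (Real.rpow_pos_of_pos hC₀ β)
  -- Bounds, in order: below for the mobility `λ|y|^β + ε`, then above for the energy, the height,
  -- the mobility and the squared `L²` norm of the flux.
  obtain ⟨c, hc⟩ : ∃ c, c = lam * C₀ ^ β := ⟨_, rfl⟩
  rw [← hc] at hcpos
  obtain ⟨E, hE⟩ : ∃ E, E = E₀ + 1 / (2 * c) * M ^ 2 := ⟨_, rfl⟩
  obtain ⟨Y, hY⟩ : ∃ Y, Y = m₀ / (b - a) + ((b - a) * (2 * E) + 1) := ⟨_, rfl⟩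
  obtain ⟨m, hm⟩ : ∃ m, m = lam * Y ^ β + ε₀ := ⟨_, rfl⟩
  obtain ⟨CJ, hCJ⟩ : ∃ CJ, CJ = 2 * m * (2 * E) + 2 * M ^ 2 := ⟨_, rfl⟩
  have hE0 : 0 ≤ E := by rw [hE]; positivity
  have hY0 : 0 ≤ Y := by rw [hY]; positivity
  have hm0 : 0 ≤ m := by rw [hm]; positivity
  have hCJ0 : 0 ≤ CJ := by rw [hCJ]; positivity
  obtain ⟨K, hK⟩ : ∃ K, K = 16 * CJ * (8 * E) ^ 3 := ⟨_, rfl⟩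
  have hK0 : 0 ≤ K := by rw [hK]; positivity
  -- `K` bounds the eighth power; `K ≤ (K + 1) ^ 8` avoids extracting an eighth root.
  refine ⟨K + 1, by positivity, ?_⟩
  intro ε hε y yx yxx yxxx yxxxx yt u ux S hy hE0init hu hmass t₁ ht₁ t₂ ht₂ x hx
  wlog h12 : t₁ ≤ t₂ generalizing t₁ t₂
  · rw [abs_sub_comm, abs_sub_comm t₂]
    exact this t₂ ht₂ t₁ ht₁ (le_of_not_ge h12)
  have hmob : ∀ t ∈ Icc 0 T, ∀ x ∈ Icc a b, c ≤ lam * |y t x| ^ β + ε := by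
    intro t ht x hx
    have h1 : C₀ ^ β ≤ |y t x| ^ β :=
      Real.rpow_le_rpow hC₀.le ((hy t ht x hx).trans (le_abs_self _)) hβ0.le
    rw [hc]
    linarith [mul_le_mul_of_nonneg_left h1 hlam.le, hε.1]
  have cm := continuousOn_mobility hβ0 S
  have iU : IntervalIntegrable (fun s => ∫ x in a..b, u s x ^ 2) MeasureTheory.volume 0 T :=
    (continuousOn_integral_slice hab.le hT.le (f := fun s x => u s x ^ 2)
      (S.cont_u.pow 2)).intervalIntegrable_of_Icc hT.le
  have iD : IntervalIntegrable (fun s => ∫ x in a..b, (lam * |y s x| ^ β + ε) * yxxx s x ^ 2)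
      MeasureTheory.volume 0 T :=
    (continuousOn_integral_slice hab.le hT.le
      (f := fun s x => (lam * |y s x| ^ β + ε) * yxxx s x ^ 2)
      (cm.mul (S.cont_yxxx.pow 2))).intervalIntegrable_of_Icc hT.le
  have henergy : ∀ t ∈ Icc 0 T, (1 / 2) * (∫ x in a..b, yx t x ^ 2)
      + (1 / 2) * (∫ s in (0 : ℝ)..t, ∫ x in a..b, (lam * |y s x| ^ β + ε) * yxxx s x ^ 2)
      ≤ E := by
    intro t ht
    refine (energy_inequality hab.le hT.le hβ0 hcpos S hmob ht).trans ?_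
    have h1 : ∫ s in (0 : ℝ)..t, ∫ x in a..b, u s x ^ 2 ≤ M ^ 2 :=
      (intervalIntegral.integral_mono_interval le_rfl ht.1 ht.2
        (Eventually.of_forall fun s => intervalIntegral.integral_nonneg hab.le
          fun _ _ => sq_nonneg _) iU).trans hu
    have h2 := mul_le_mul_of_nonneg_left h1 (by positivity : 0 ≤ 1 / (2 * c))
    rw [hE]
    linarith
  have hgrad : ∀ t ∈ Icc 0 T, ∫ x in a..b, yx t x ^ 2 ≤ 2 * E := by
    intro t ht
    have h1 : 0 ≤ ∫ s in (0 : ℝ)..t, ∫ x in a..b, (lam * |y s x| ^ β + ε) * yxxx s x ^ 2 :=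
      intervalIntegral.integral_nonneg ht.1 fun s hs =>
        intervalIntegral.integral_nonneg hab.le fun x hx =>
          mul_nonneg (hcpos.le.trans (hmob s ⟨hs.1, hs.2.trans ht.2⟩ x hx)) (sq_nonneg _)
    linarith [henergy t ht]
  have hdiss : ∫ s in (0 : ℝ)..T, ∫ x in a..b, (lam * |y s x| ^ β + ε) * yxxx s x ^ 2
      ≤ 2 * E := by
    have h1 : 0 ≤ ∫ x in a..b, yx T x ^ 2 :=
      intervalIntegral.integral_nonneg hab.le fun _ _ => sq_nonneg _
    linarith [henergy T (right_mem_Icc.2 hT.le)]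
  have hmobu : ∀ t ∈ Icc 0 T, ∀ x ∈ Icc a b, lam * |y t x| ^ β + ε ≤ m := by
    intro t ht x hx
    have h1 : |y t x| ≤ Y := by
      rw [abs_of_nonneg (hC₀.le.trans (hy t ht x hx)), hY]
      exact height_le hab S hmass ht (hgrad t ht) hx
    have h2 := Real.rpow_le_rpow (abs_nonneg _) h1 hβ0.le
    rw [hm]
    linarith [mul_le_mul_of_nonneg_left h2 hlam.le, hε.2]
  have hJ : ∫ s in (0 : ℝ)..T, ∫ x in a..b,
      ((lam * |y s x| ^ β + ε) * yxxx s x - u s x) ^ 2 ≤ CJ := by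
    have hle : ∫ s in (0 : ℝ)..T, ∫ x in a..b,
        ((lam * |y s x| ^ β + ε) * yxxx s x - u s x) ^ 2
        ≤ ∫ s in (0 : ℝ)..T, (2 * m * (∫ x in a..b, (lam * |y s x| ^ β + ε) * yxxx s x ^ 2)
          + 2 * ∫ x in a..b, u s x ^ 2) := by
      refine intervalIntegral.integral_mono_on hT.le
        ((continuousOn_integral_slice hab.le hT.le
          (f := fun s x => ((lam * |y s x| ^ β + ε) * yxxx s x - u s x) ^ 2)
          (((cm.mul S.cont_yxxx).sub S.cont_u).pow 2)).intervalIntegrable_of_Icc hT.le)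
        ((iD.const_mul _).add (iU.const_mul _)) fun s hs => ?_
      have sm := continuousOn_slice (f := fun s x => lam * |y s x| ^ β + ε) cm hs
      have su := continuousOn_slice S.cont_u hs
      have s3 := continuousOn_slice S.cont_yxxx hs
      have i1 : IntervalIntegrable (fun x => 2 * m * ((lam * |y s x| ^ β + ε) * yxxx s x ^ 2))
          MeasureTheory.volume a b :=
        (continuousOn_const.mul (sm.mul (s3.pow 2))).intervalIntegrable_of_Icc hab.le
      have i2 : IntervalIntegrable (fun x => 2 * u s x ^ 2) MeasureTheory.volume a b :=
        (continuousOn_const.mul (su.pow 2)).intervalIntegrable_of_Icc hab.le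
      rw [← intervalIntegral.integral_const_mul, ← intervalIntegral.integral_const_mul,
        ← intervalIntegral.integral_add i1 i2]
      refine intervalIntegral.integral_mono_on hab.le
        ((((sm.mul s3).sub su).pow 2).intervalIntegrable_of_Icc hab.le) (i1.add i2)
        fun x hx => ?_
      have h1 := hmob s hs x hx
      have h2 := hmobu s hs x hx
      have h3 : 0 ≤ (lam * |y s x| ^ β + ε) * yxxx s x ^ 2 :=
        mul_nonneg (hcpos.le.trans h1) (sq_nonneg _)
      have h4 := mul_le_mul_of_nonneg_right h2 h3
      nlinarith [sq_nonneg ((lam * |y s x| ^ β + ε) * yxxx s x + u s x)]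
    rw [intervalIntegral.integral_add (iD.const_mul _) (iU.const_mul _),
      intervalIntegral.integral_const_mul, intervalIntegral.integral_const_mul] at hle
    have h1 := mul_le_mul_of_nonneg_left hdiss (by positivity : 0 ≤ 2 * m)
    rw [hCJ]
    linarith
  have h8 := increment_pow_eight_le hab hβ0 S hgrad hJ ht₁.1 h12 ht₂.2 hx
  have hτ : 0 ≤ t₂ - t₁ := sub_nonneg.2 h12
  rw [abs_of_nonneg hτ]
  have hr : ((t₂ - t₁) ^ ((1 : ℝ) / 8)) ^ 8 = t₂ - t₁ := by
    rw [← Real.rpow_natCast, ← Real.rpow_mul hτ]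
    norm_num
  refine le_of_pow_le_pow_left₀ (n := 8) (by norm_num) (by positivity) ?_
  rw [mul_pow, hr, Even.pow_abs (by decide)]
  have hKpow : K ≤ (K + 1) ^ 8 :=
    (by linarith : K ≤ K + 1).trans (le_self_pow₀ (by linarith) (by norm_num))
  calc (y t₂ x - y t₁ x) ^ 8 ≤ 16 * ((t₂ - t₁) * CJ) * (8 * E) ^ 3 := h8
    _ = K * (t₂ - t₁) := by rw [hK]; ring
    _ ≤ (K + 1) ^ 8 * (t₂ - t₁) := mul_le_mul_of_nonneg_right hKpow hτ
end
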